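/- (Asymptotic lower bound for the logarithmically rescaled interaction energy of well-separated phases in a cube) Let N ≥ 2. There exists a constant ξ = ξ(N−1) > 0 depending only on the dimension such that the following holds. Let R > 0, c > 0 and λ ∈ (0, 1/3). Let ε_j → 0⁺ and let A_j, B_j ⊂ Q_R(0) be disjoint measurable sets such that, writing Q⁺ := Q_R'(0) × (0, R/2) and Q⁻ := Q_R'(0) × (−R/2, 0), one has |Q⁺ ∩ A_j| > (1 − λ²) R^N/2, |Q⁻ ∩ B_j| > (1 − λ²) R^N/2, and |Q_R(0) \ (A_j ∪ B_j)| < c ε_j (1 − 3λ − 6/|ln ε_j|) for all j. Then liminf_{j→∞} (1/|ln ε_j|) G(A_j, B_j, Q_R(0)) ≥ R^{N−1} ω_{N−1} (1 − 3λ)(1 − 4 ξ(N−1) λ). -/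

import Mathlib

/-!
With `m(h)` the measure of `{x ∈ A | x + h ∈ B}`, the energy is `∫ |h|^{-(N+1)} m(h) dh`
(`Gkernel_eq_lintegral_translate`), so it suffices to bound `m(h)` from below for short downward
displacements `h`. Put `N = M + 1`.

Start from a horizontal slab of thickness `s = -h_N` near the top of a layer around `{x_N = 0}` and
follow the chains `x + k h` through that layer. A chain with an upper point in `A`, a lower point in
`B` and no point in the gap `Q \ (A ∪ B)` contains a direct jump from `A` to `B`. The translates of
the slab are disjoint, so the chains that meet the gap have measure at most that of the gap, and
those that miss `A` in their whole upper half, or `B` in their whole lower half, have measure of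
order `λ² R^N / n`, where `n ~ λ R / |h|` is half the length of a chain (`chain_measure_le`).
Therefore (`volume_slab_le_jump`)

`m(h) ≥ (R (1 - 4 λ))^M s - c ε - 2 λ R^M |h|`  whenever `|h| ≤ λ R`.

Write `h = s (w, -1)` and integrate over `ε < s < ρ`, `|w| < 1 / λ` (`energy_lower_bound`). The main
term is `log (ρ / ε)` times `∫ (1 + |w|²)^{-(M+2)/2} dw` over `|w| < 1 / λ`, which is
`ω_M (1 + O(λ))` (`lintegral_ball_slope`). The gap contributes a bounded amount, negligible against
`|log ε|`, and the last term costs at most `2 λ R^M K log (ρ / ε)` with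
`K = ∫ (1 + |w|²)^{-(M+1)/2} dw < ∞`. Dividing by `|log ε|` leaves `R^M ω_M (1 - O(λ))`, and `ξ` is
chosen to absorb the `O(λ)` (`limit_constant_ge`); when `4 ξ λ ≥ 1` the claim is trivial.
-/

open MeasureTheory Filter Set
open scoped ENNReal Topology

noncomputable section

/-- The localized nonlocal interaction energy
`G(A,B,S) = ∫_{A∩S} ∫_{B∩S} |y - x|^{-(N+1)} dy dx` (with values in `ℝ≥0∞`). -/
def Gkernel (N : ℕ) (A B S : Set (EuclideanSpace ℝ (Fin N))) : ℝ≥0∞ :=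
  ∫⁻ x in A ∩ S, ∫⁻ y in B ∩ S, ENNReal.ofReal (1 / ‖y - x‖ ^ (N + 1))

/-! ### Displacements and the discrete slicing inequality -/

/-- The energy in terms of displacements: each `h` contributes the kernel `|h|^{-(N+1)}` times the
measure of the set of `x ∈ A` with `x + h ∈ B`. -/
lemma Gkernel_eq_lintegral_translate {N : ℕ} {A B Q : Set (EuclideanSpace ℝ (Fin N))}
    (hB : MeasurableSet B) (hAQ : A ⊆ Q) (hBQ : B ⊆ Q) :
    Gkernel N A B Q =
      ∫⁻ h : EuclideanSpace ℝ (Fin N), ENNReal.ofReal (1 / ‖h‖ ^ (N + 1)) *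
        volume (A ∩ {x | x + h ∈ B}) := by
  have hk : Measurable fun h : EuclideanSpace ℝ (Fin N) =>
      ENNReal.ofReal (1 / ‖h‖ ^ (N + 1)) := by fun_prop
  unfold Gkernel
  rw [inter_eq_left.2 hAQ, inter_eq_left.2 hBQ]
  have h1 : ∀ x : EuclideanSpace ℝ (Fin N),
      ∫⁻ y in B, ENNReal.ofReal (1 / ‖y - x‖ ^ (N + 1)) =
      ∫⁻ h, ENNReal.ofReal (1 / ‖h‖ ^ (N + 1)) * B.indicator 1 (x + h) := by
    intro x
    rw [← lintegral_indicator hB, ← lintegral_add_left_eq_self _ x]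
    congr 1 with h
    by_cases hh : x + h ∈ B <;> simp [hh]
  simp_rw [h1]
  rw [lintegral_lintegral_swap]
  · congr 1 with h
    have hm : MeasurableSet {x | x + h ∈ B} := (measurable_add_const h) hB
    have he : (fun x => B.indicator (1 : EuclideanSpace ℝ (Fin N) → ℝ≥0∞) (x + h)) =
        ({x | x + h ∈ B} : Set _).indicator 1 := rfl
    rw [lintegral_const_mul _ (he ▸ measurable_one.indicator hm), he, lintegral_indicator_one hm, Measure.restrict_apply hm, inter_comm]
  · apply Measurable.aemeasurable
    exact (hk.comp measurable_snd).mul ((measurable_one.indicator hB).comp measurable_add)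

/-- If the translates `S + k • h` are disjoint, the portions of `F` seen from them add up to at
most the measure of `F`. -/
lemma sum_measure_translates_le {E : Type*} [AddCommGroup E] [MeasurableSpace E]
    [MeasurableAdd E] {μ : Measure E} [μ.IsAddRightInvariant]
    {S : Set E} (hS : MeasurableSet S) (I : Finset ℕ) (h : E)
    (hdisj : ∀ k ∈ I, ∀ l ∈ I, k ≠ l → ∀ x ∈ S, ∀ y ∈ S, x + k • h ≠ y + l • h)
    {F : Set E} (hF : MeasurableSet F) :
    ∑ k ∈ I, μ (S ∩ {x | x + k • h ∈ F}) ≤ μ F := by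
  have hm : ∀ k : ℕ, MeasurableSet {y : E | y + -(k • h) ∈ S} :=
    fun k => (measurable_add_const _) hS
  have h1 : ∀ k : ℕ, μ (S ∩ {x | x + k • h ∈ F}) = μ ({y | y + -(k • h) ∈ S} ∩ F) := by
    intro k
    rw [← measure_preimage_add_right μ (k • h) ({y | y + -(k • h) ∈ S} ∩ F)]
    congr 1
    ext x
    simp
  simp_rw [h1]
  rw [← measure_biUnion_finset]
  · exact measure_mono (by simp)
  · intro k hk l hl hkl
    rw [Function.onFun, Set.disjoint_left]
    rintro y ⟨hy1, -⟩ ⟨hy2, -⟩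
    exact hdisj k hk l hl hkl _ hy1 _ hy2 (by simp)
  · exact fun k _ => (hm k).inter hF

/-- Discrete slicing. Each `x ∈ S` starts a chain `x, x + h, …, x + (2n-1) • h` whose first half lies
in `P` and whose second half lies in `P'`. A chain either jumps directly from `A` to `B`, or meets
the gap `Q \ (A ∪ B)`, or has its whole first half in `P \ A`, or its whole second half in
`P' \ B`. The last two alternatives use up `n` disjoint translates, hence the factor `1/n`. -/
lemma chain_measure_le {E : Type*} [AddCommGroup E] [MeasurableSpace E]
    [MeasurableAdd E] {μ : Measure E} [μ.IsAddRightInvariant]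
    {S A B Q P P' : Set E} (hS : MeasurableSet S) (hA : MeasurableSet A) (hB : MeasurableSet B)
    (hQ : MeasurableSet Q) (hP : MeasurableSet P) (hP' : MeasurableSet P')
    {n : ℕ} (hn : 0 < n) (h : E)
    (hdisj : ∀ k l : ℕ, k ≠ l → ∀ x ∈ S, ∀ y ∈ S, x + k • h ≠ y + l • h)
    (hSQ : ∀ x ∈ S, ∀ k < 2 * n, x + k • h ∈ Q)
    (hSP : ∀ x ∈ S, ∀ k < n, x + k • h ∈ P)
    (hSP' : ∀ x ∈ S, ∀ k, n ≤ k → k < 2 * n → x + k • h ∈ P') :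
    μ S ≤ μ (A ∩ {x | x + h ∈ B}) + μ (Q \ (A ∪ B)) + (μ (P \ A) + μ (P' \ B)) / n := by
  have hn0 : (n : ℝ≥0∞) ≠ 0 := by exact_mod_cast hn.ne'
  have hnt : (n : ℝ≥0∞) ≠ ∞ := ENNReal.natCast_ne_top n
  have hG : MeasurableSet (A ∩ {x | x + h ∈ B}) := hA.inter ((measurable_add_const h) hB)
  set I := Finset.range (2 * n)
  -- if a chain has an upper point in `A`, a lower point in `B` and no point in the gap,
  -- some consecutive pair jumps from `A` to `B`
  have hcover : S ⊆ (((⋃ k ∈ I, S ∩ {x | x + k • h ∈ A ∩ {x | x + h ∈ B}}) ∪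
      (⋃ k ∈ I, S ∩ {x | x + k • h ∈ Q \ (A ∪ B)})) ∪
      ((⋂ k ∈ Finset.range n, S ∩ {x | x + k • h ∈ P \ A}) ∪
      (⋂ k ∈ Finset.Ico n (2 * n), S ∩ {x | x + k • h ∈ P' \ B}))) := by
    intro x hx
    by_contra hcon
    simp only [mem_union, not_or] at hcon
    obtain ⟨⟨hg, hb⟩, hp, hp'⟩ := hcon
    simp only [mem_iUnion, mem_iInter, not_forall, exists_prop, not_exists, not_and,
      mem_inter_iff, hx, true_and, mem_ofPred_eq, Set.mem_sdiff, I, Finset.mem_range,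
      Finset.mem_Ico] at hg hb hp hp'
    obtain ⟨k, hk, hkA⟩ := hp
    obtain ⟨l, ⟨hl1, hl2⟩, hlB⟩ := hp'
    have hkA' : x + k • h ∈ A := by
      by_contra hc
      exact hkA (hSP x hx k hk) hc
    have hlB' : x + l • h ∈ B := by
      by_contra hc
      exact hlB (hSP' x hx l hl1 hl2) hc
    have hstep : ∀ m, k ≤ m → m < l → x + m • h ∈ A := by
      intro m hm
      induction m, hm using Nat.le_induction with
      | base => exact fun _ => hkA'
      | succ m hm ih =>
        intro hml
        have hmA := ih (by omega)
        have hnB := hg m (by omega) hmA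
        have hmem := hb (m + 1) (by omega) (hSQ x hx (m + 1) (by omega))
        have he : x + (m + 1) • h = x + m • h + h := by rw [succ_nsmul, add_assoc]
        rw [not_not, he] at hmem
        rw [he]
        exact hmem.resolve_right hnB
    have hl0 : l = (l - 1) + 1 := by omega
    apply hg (l - 1) (by omega) (hstep (l - 1) (by omega) (by omega))
    have he : x + l • h = x + (l - 1) • h + h := by
      conv_lhs => rw [hl0]
      rw [succ_nsmul, add_assoc]
    rw [← he]
    exact hlB'
  have hd : ∀ I : Finset ℕ, ∀ k ∈ I, ∀ l ∈ I, k ≠ l → ∀ x ∈ S, ∀ y ∈ S,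
      x + k • h ≠ y + l • h := fun _ k _ l _ => hdisj k l
  have hU : ∀ F : Set E, MeasurableSet F →
      μ (⋃ k ∈ I, S ∩ {x | x + k • h ∈ F}) ≤ μ F := fun F hF =>
    (measure_biUnion_finset_le _ _).trans (sum_measure_translates_le hS I h (hd I) hF)
  have hI : ∀ (J : Finset ℕ), J.card = n → ∀ F : Set E, MeasurableSet F →
      μ (⋂ k ∈ J, S ∩ {x | x + k • h ∈ F}) ≤ μ F / n := by
    intro J hJ F hF
    rw [ENNReal.le_div_iff_mul_le (Or.inl hn0) (Or.inl hnt)]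
    refine le_trans ?_ (sum_measure_translates_le hS J h (hd J) hF)
    rw [mul_comm, ← hJ, ← nsmul_eq_mul]
    exact Finset.card_nsmul_le_sum _ _ _ fun k hk => measure_mono (biInter_subset_of_mem hk)
  calc μ S ≤ _ := measure_mono hcover
    _ ≤ _ := (measure_union_le _ _).trans (add_le_add (measure_union_le _ _)
        (measure_union_le _ _))
    _ ≤ (μ (A ∩ {x | x + h ∈ B}) + μ (Q \ (A ∪ B))) + (μ (P \ A) / n + μ (P' \ B) / n) := by
        exact add_le_add (add_le_add (hU _ hG) (hU _ (hQ.diff (hA.union hB))))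
          (add_le_add (hI _ (by simp) _ (hP.diff hA))
            (hI _ (by simp; omega) _ (hP'.diff hB)))
    _ = _ := by rw [ENNReal.add_div]

/-! ### Coordinates on the displacements -/

/-- The vector `s • (w, -1)` of `ℝ^{M+1}`: depth `s` below the horizontal hyperplane, slope `w`. -/
def descent {M : ℕ} (s : ℝ) (w : EuclideanSpace ℝ (Fin M)) : EuclideanSpace ℝ (Fin (M + 1)) :=
  WithLp.toLp 2 (Fin.snoc (fun i => s * w i) (-s) : Fin (M + 1) → ℝ)

@[simp] lemma descent_castSucc {M : ℕ} (s : ℝ) (w : EuclideanSpace ℝ (Fin M)) (i : Fin M) :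
    descent s w i.castSucc = s * w i := by
  simp [descent]

@[simp] lemma descent_last {M : ℕ} (s : ℝ) (w : EuclideanSpace ℝ (Fin M)) :
    descent s w (Fin.last M) = -s := by
  simp [descent]

lemma norm_descent {M : ℕ} {s : ℝ} (hs : 0 ≤ s) (w : EuclideanSpace ℝ (Fin M)) :
    ‖descent s w‖ = s * √(1 + ‖w‖ ^ 2) := by
  rw [← Real.sqrt_sq (norm_nonneg (descent s w))]
  have : ‖descent s w‖ ^ 2 = s ^ 2 * (1 + ‖w‖ ^ 2) := by
    rw [EuclideanSpace.norm_sq_eq, EuclideanSpace.norm_sq_eq, Fin.sum_univ_castSucc]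
    simp [mul_pow, ← Finset.mul_sum]
    ring
  rw [this, Real.sqrt_mul (sq_nonneg s), Real.sqrt_sq hs]

lemma volume_box {M : ℕ} (I J : Set ℝ) :
    volume {x : EuclideanSpace ℝ (Fin (M + 1)) |
      (∀ i : Fin M, x i.castSucc ∈ I) ∧ x (Fin.last M) ∈ J} = volume I ^ M * volume J := by
  have h : {x : EuclideanSpace ℝ (Fin (M + 1)) |
      (∀ i : Fin M, x i.castSucc ∈ I) ∧ x (Fin.last M) ∈ J} =
      (MeasurableEquiv.toLp 2 (Fin (M + 1) → ℝ)).symm ⁻¹'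
        (Set.pi univ (Fin.snoc (fun _ => I) J : Fin (M + 1) → Set ℝ)) := by
    ext x
    simp [Fin.forall_fin_succ', Set.mem_pi]
  rw [h, (EuclideanSpace.volume_preserving_symm_measurableEquiv_toLp _).measure_preimage_equiv,
    volume_pi_pi, Fin.prod_univ_castSucc]
  simp

/-- Change of variables `h = s • (w, -1)` with Jacobian `s ^ M`, an inequality because only the
depths `s ∈ T` are kept. -/
lemma lintegral_descent_le {M : ℕ} {F : EuclideanSpace ℝ (Fin (M + 1)) → ℝ≥0∞}
    (hF : Measurable F) {T : Set ℝ} (hT : MeasurableSet T) (hT0 : ∀ s ∈ T, 0 < s) :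
    ∫⁻ s in T, ∫⁻ w : EuclideanSpace ℝ (Fin M),
      ENNReal.ofReal (s ^ M) * F (descent s w) ≤ ∫⁻ h, F h := by
  let e := MeasurableEquiv.piFinSuccAbove (fun _ : Fin (M + 1) => ℝ) (Fin.last M)
  have he : MeasurePreserving e volume volume :=
    volume_preserving_piFinSuccAbove (fun _ : Fin (M + 1) => ℝ) (Fin.last M)
  have hmp : Measurable fun p : ℝ × (Fin M → ℝ) => F (WithLp.toLp 2 (e.symm p)) := by
    have : Measurable (WithLp.toLp 2 : (Fin (M + 1) → ℝ) → _) :=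
      (MeasurableEquiv.toLp 2 (Fin (M + 1) → ℝ)).measurable
    exact hF.comp (this.comp e.symm.measurable)
  have h1 : ∫⁻ h, F h = ∫⁻ s : ℝ, ∫⁻ w : EuclideanSpace ℝ (Fin M),
      F (WithLp.toLp 2 (e.symm (s, w.ofLp))) := by
    rw [← (PiLp.volume_preserving_toLp (Fin (M + 1))).lintegral_comp hF,
      ← (he.symm e).lintegral_comp_emb e.symm.measurableEmbedding, Measure.volume_eq_prod,
      lintegral_prod _ hmp.aemeasurable]
    congr 1 with s
    exact ((PiLp.volume_preserving_ofLp (Fin M)).lintegral_comp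
      (hmp.comp measurable_prodMk_left)).symm
  rw [h1, ← lintegral_neg_eq_self (μ := (volume : Measure ℝ)) (fun s => ∫⁻ w : EuclideanSpace ℝ (Fin M),
      F (WithLp.toLp 2 (e.symm (s, w.ofLp))))]
  refine le_trans ?_ (setLIntegral_le_lintegral T _)
  refine setLIntegral_mono' hT fun s hs => ?_
  have hs0 := hT0 s hs
  set g : EuclideanSpace ℝ (Fin M) → ℝ≥0∞ := fun w => F (WithLp.toLp 2 (e.symm (-s, w.ofLp)))
  have hg : ∀ w, F (descent s w) = g (s • w) := by
    intro w
    simp only [g]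
    congr 2
    ext i
    refine Fin.lastCases ?_ (fun i => ?_) i
    · simp [e]
    · simp [e]
  have hmg : Measurable g := by
    have : Measurable (WithLp.ofLp : EuclideanSpace ℝ (Fin M) → _) :=
      (MeasurableEquiv.toLp 2 (Fin M → ℝ)).symm.measurable
    exact hmp.comp (measurable_prodMk_left.comp this)
  simp_rw [hg]
  have hmc : Measurable fun w => g (s • w) := hmg.comp (measurable_const_smul s)
  rw [lintegral_const_mul _ hmc]
  rw [← lintegral_map hmg (measurable_const_smul s), Measure.map_addHaar_smul _ hs0.ne',
    lintegral_smul_measure, smul_eq_mul, ← mul_assoc, ← ENNReal.ofReal_mul (by positivity)]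
  simp only [finrank_euclideanSpace, Fintype.card_fin]
  rw [abs_of_pos (by positivity), mul_inv_cancel₀ (by positivity)]
  simp

/-! ### Jumps in the cube -/

/-- The closed cube `Q_R(0)`. -/
def cube (N : ℕ) (R : ℝ) : Set (EuclideanSpace ℝ (Fin N)) := {x | ∀ i, |x i| ≤ R / 2}

/-- The slab of the cube of side `R` in `ℝ^{M+1}` whose last coordinate lies in `J`. -/
def slab (M : ℕ) (R : ℝ) (J : Set ℝ) : Set (EuclideanSpace ℝ (Fin (M + 1))) :=
  {x | (∀ i : Fin M, x i.castSucc ∈ Icc (-(R / 2)) (R / 2)) ∧ x (Fin.last M) ∈ J}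

lemma measurableSet_cube (N : ℕ) (R : ℝ) : MeasurableSet (cube N R) := by
  unfold cube
  measurability

lemma measurableSet_slab (M : ℕ) (R : ℝ) {J : Set ℝ} (hJ : MeasurableSet J) :
    MeasurableSet (slab M R J) := by
  unfold slab
  measurability

lemma volume_slab (M : ℕ) {R : ℝ} (hR : 0 ≤ R) (a b : ℝ) :
    volume (slab M R (Ioo a b)) = ENNReal.ofReal (R ^ M * (b - a)) := by
  unfold slab
  rw [volume_box, Real.volume_Icc, Real.volume_Ioo, ← ENNReal.ofReal_pow (by linarith),
    ← ENNReal.ofReal_mul (pow_nonneg (by linarith) _)]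
  congr 2
  ring

/-- The measure of the points of `A` sent into `B` by a short downward displacement `h = descent s w`
is at least the volume `(R (1 - 4 λ)) ^ M * s` of a thin slab, up to the gap and an error
`2 λ R ^ M |h|`. The chains have `2n` points with `n = ⌊λ R / |h|⌋`, so they move by at most `2 λ R`
and stay in the cube when started at distance `2 λ R` from its lateral faces. -/
lemma volume_slab_le_jump {M : ℕ} {R lam : ℝ} (hR : 0 < R) (hl : 0 < lam) (hl4 : lam < 1 / 4)
    {A B : Set (EuclideanSpace ℝ (Fin (M + 1)))} (hA : MeasurableSet A) (hB : MeasurableSet B)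
    (hPA : volume (slab M R (Ioo 0 (R / 2)) \ A) ≤ ENNReal.ofReal (lam ^ 2 * R ^ (M + 1) / 2))
    (hPB : volume (slab M R (Ioo (-(R / 2)) 0) \ B) ≤ ENNReal.ofReal (lam ^ 2 * R ^ (M + 1) / 2))
    {s : ℝ} (hs : 0 < s) (w : EuclideanSpace ℝ (Fin M)) (ht : ‖descent s w‖ ≤ lam * R) :
    ENNReal.ofReal ((R * (1 - 4 * lam)) ^ M * s) ≤
      volume (A ∩ {x | x + descent s w ∈ B}) + volume (cube (M + 1) R \ (A ∪ B)) +
      ENNReal.ofReal (2 * lam * R ^ M * ‖descent s w‖) := by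
  set h := descent s w with hh
  set t := ‖h‖ with htdef
  have hlast : h (Fin.last M) = -s := descent_last s w
  have hcoord : ∀ i, |h i| ≤ t := fun i => PiLp.norm_apply_le h i
  have hst : s ≤ t := by
    have := hcoord (Fin.last M)
    rwa [hlast, abs_neg, abs_of_pos hs] at this
  have ht0 : 0 < t := hs.trans_le hst
  set n := ⌊lam * R / t⌋₊ with hndef
  have hn1 : 1 ≤ n := by
    rw [hndef, Nat.one_le_floor_iff, one_le_div ht0]
    exact ht
  have hn1' : (1 : ℝ) ≤ n := by exact_mod_cast hn1
  have hnt : n * t ≤ lam * R := by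
    rw [← le_div_iff₀ ht0]
    exact Nat.floor_le (by positivity)
  have hnt2 : lam * R ≤ 2 * n * t := by
    have := (Nat.lt_floor_add_one (lam * R / t)).le
    rw [div_le_iff₀ ht0] at this
    nlinarith
  have hns : n * s ≤ lam * R := le_trans (by gcongr) hnt
  have hlR : lam * R < R / 4 := by nlinarith
  set S := slab M (R * (1 - 4 * lam)) (Ioo ((n - 1) * s) (n * s)) with hS
  have hsmul : ∀ (x : EuclideanSpace ℝ (Fin (M + 1))) (k : ℕ) i,
      (x + k • h) i = x i + k * h i := by
    intro x k i
    simp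
  have hlastk : ∀ x ∈ S, ∀ k : ℕ, (n - 1 - k) * s < (x + k • h) (Fin.last M) ∧
      (x + k • h) (Fin.last M) < (n - k) * s := by
    intro x hx k
    have := hx.2
    rw [hsmul, hlast]
    constructor <;> nlinarith [this.1, this.2]
  have hhor : ∀ x ∈ S, ∀ k < 2 * n, ∀ i : Fin M,
      (x + k • h) i.castSucc ∈ Icc (-(R / 2)) (R / 2) := by
    intro x hx k hk i
    have h1 := hx.1 i
    have h2 := abs_le.1 (hcoord i.castSucc)
    have hk' : (k : ℝ) ≤ 2 * n := by exact_mod_cast hk.le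
    have hkt : k * t ≤ 2 * (lam * R) := by nlinarith
    have hk0 : (0 : ℝ) ≤ k := Nat.cast_nonneg k
    rw [hsmul]
    constructor <;> nlinarith [h1.1, h1.2, mul_le_mul_of_nonneg_left h2.1 hk0,
      mul_le_mul_of_nonneg_left h2.2 hk0]
  have hup : ∀ x ∈ S, ∀ k < n, x + k • h ∈ slab M R (Ioo 0 (R / 2)) := by
    intro x hx k hk
    have hk' : (k : ℝ) + 1 ≤ n := by exact_mod_cast hk
    have hk0 : (0 : ℝ) ≤ k := Nat.cast_nonneg k
    obtain ⟨h1, h2⟩ := hlastk x hx k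
    refine ⟨hhor x hx k (by omega), ?_, ?_⟩ <;> nlinarith
  have hdown : ∀ x ∈ S, ∀ k, n ≤ k → k < 2 * n → x + k • h ∈ slab M R (Ioo (-(R / 2)) 0) := by
    intro x hx k hk1 hk2
    have hk1' : (n : ℝ) ≤ k := by exact_mod_cast hk1
    have hk2' : (k : ℝ) + 1 ≤ 2 * n := by exact_mod_cast hk2
    obtain ⟨h1, h2⟩ := hlastk x hx k
    refine ⟨hhor x hx k (by omega), ?_, ?_⟩ <;> nlinarith
  have hsub : ∀ J : Set ℝ, J ⊆ Icc (-(R / 2)) (R / 2) → slab M R J ⊆ cube (M + 1) R := by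
    intro J hJ x hx i
    rw [abs_le]
    refine Fin.lastCases ?_ (fun i => ?_) i
    · exact hJ hx.2
    · exact hx.1 i
  have key := chain_measure_le (μ := volume) (S := S) (Q := cube (M + 1) R)
    (measurableSet_slab M _ measurableSet_Ioo) hA hB (measurableSet_cube (M + 1) R)
    (measurableSet_slab M R measurableSet_Ioo) (measurableSet_slab M R measurableSet_Ioo)
    (n := n) hn1 h ?_ ?_ hup hdown
  · rw [hS, volume_slab M (by nlinarith)] at key
    have e1 : (n : ℝ) * s - (n - 1) * s = s := by ring
    rw [e1] at key
    refine key.trans (add_le_add le_rfl ?_)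
    calc _ ≤ (ENNReal.ofReal (lam ^ 2 * R ^ (M + 1) / 2) +
          ENNReal.ofReal (lam ^ 2 * R ^ (M + 1) / 2)) / n := by gcongr
      _ = ENNReal.ofReal (lam ^ 2 * R ^ (M + 1) / n) := by
          rw [← ENNReal.ofReal_add (by positivity) (by positivity),
            ← ENNReal.ofReal_natCast n, ← ENNReal.ofReal_div_of_pos (by positivity)]
          congr 2
          ring
      _ ≤ _ := by
          apply ENNReal.ofReal_le_ofReal
          rw [div_le_iff₀ (by positivity)]
          have : 0 ≤ lam * R ^ M := by positivity
          calc lam ^ 2 * R ^ (M + 1) = (lam * R ^ M) * (lam * R) := by ring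
            _ ≤ (lam * R ^ M) * (2 * n * t) := by gcongr
            _ = _ := by ring
  · -- the last coordinates of distinct translates of `S` lie in disjoint intervals
    intro k l hkl x hx y hy hxy
    have h1 := hlastk x hx k
    have h2 := hlastk y hy l
    rw [hxy] at h1
    rcases lt_or_gt_of_ne hkl with hlt | hlt
    · have : (k : ℝ) + 1 ≤ l := by exact_mod_cast hlt
      nlinarith [h1.1, h2.2]
    · have : (l : ℝ) + 1 ≤ k := by exact_mod_cast hlt
      nlinarith [h1.2, h2.1]
  · intro x hx k hk
    rcases lt_or_ge k n with hkn | hkn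
    · exact hsub _ (fun y hy => ⟨by linarith [hy.1], hy.2.le⟩) (hup x hx k hkn)
    · exact hsub _ (fun y hy => ⟨hy.1.le, by linarith [hy.2]⟩) (hdown x hx k hkn hk)

/-! ### Radial integrals and integration over displacements -/

lemma setLIntegral_Ioo_of_hasDerivAt {F f : ℝ → ℝ} {a b : ℝ} (hab : a ≤ b)
    (hF : ∀ x ∈ Icc a b, HasDerivAt F (f x) x) (hf : ContinuousOn f (Icc a b))
    (hf0 : ∀ x ∈ Ioo a b, 0 ≤ f x) :
    ∫⁻ x in Ioo a b, ENNReal.ofReal (f x) = ENNReal.ofReal (F b - F a) := by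
  have hi : IntegrableOn f (Ioo a b) := (hf.integrableOn_Icc).mono_set Ioo_subset_Icc_self
  rw [← ofReal_integral_eq_lintegral_ofReal hi
    ((ae_restrict_iff' measurableSet_Ioo).2 (Eventually.of_forall hf0)),
    ← integral_Ioc_eq_integral_Ioo, ← intervalIntegral.integral_of_le hab,
    intervalIntegral.integral_eq_sub_of_hasDerivAt]
  · rwa [uIcc_of_le hab]
  · exact ContinuousOn.intervalIntegrable (by rwa [uIcc_of_le hab])

/-- The radial primitive behind the identity `∫ (1 + |w|²)^{-(M+2)/2} dw = ω_M` on `ℝ^M`. -/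
lemma hasDerivAt_div_sqrt_pow (M : ℕ) (hM : 1 ≤ M) (y : ℝ) :
    HasDerivAt (fun y : ℝ => (y / √(1 + y ^ 2)) ^ M)
      (M * (y ^ (M - 1) * (1 / √(1 + y ^ 2) ^ (M + 2)))) y := by
  have hp : 0 < 1 + y ^ 2 := by positivity
  have hs : 0 < √(1 + y ^ 2) := Real.sqrt_pos.2 hp
  have hq : √(1 + y ^ 2) ^ 2 = 1 + y ^ 2 := Real.sq_sqrt hp.le
  have h1 : HasDerivAt (fun y : ℝ => 1 + y ^ 2) (2 * y) y := by
    simpa using (hasDerivAt_pow 2 y).const_add 1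
  have h2 := ((hasDerivAt_id y).div (h1.sqrt hp.ne') hs.ne').pow M
  refine h2.congr_deriv ?_
  obtain ⟨m, rfl⟩ : ∃ m, M = m + 1 := ⟨M - 1, by omega⟩
  simp only [id, Nat.add_sub_cancel, Pi.div_apply]
  rw [hq]
  have e : (1 * √(1 + y ^ 2) - y * (2 * y / (2 * √(1 + y ^ 2)))) / (1 + y ^ 2) =
      1 / √(1 + y ^ 2) ^ 3 := by
    have : (1 * √(1 + y ^ 2) - y * (2 * y / (2 * √(1 + y ^ 2)))) = 1 / √(1 + y ^ 2) := by
      field_simp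
      rw [hq]
      ring
    rw [this, div_div, pow_succ' _ 2, hq]
  rw [e, div_pow]
  field_simp
  ring

/-- Integrating the slope kernel over the ball of radius `Λ` gives `ω_M (Λ / √(1 + Λ²)) ^ M`, which
tends to `ω_M` as `Λ → ∞`; this is where the constant `ω_{N-1}` comes from. -/
lemma lintegral_ball_slope {M : ℕ} (hM : 1 ≤ M) {Λ : ℝ} (hΛ : 0 < Λ) :
    ∫⁻ w in Metric.ball (0 : EuclideanSpace ℝ (Fin M)) Λ,
      ENNReal.ofReal (1 / √(1 + ‖w‖ ^ 2) ^ (M + 2)) =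
    ENNReal.ofReal ((volume (Metric.ball (0 : EuclideanSpace ℝ (Fin M)) 1)).toReal *
      (Λ / √(1 + Λ ^ 2)) ^ M) := by
  have : Nonempty (Fin M) := ⟨⟨0, hM⟩⟩
  set f : ℝ → ℝ := fun y => 1 / √(1 + y ^ 2) ^ (M + 2) with hf
  have hs : ∀ y : ℝ, 0 < √(1 + y ^ 2) := fun y => Real.sqrt_pos.2 (by positivity)
  have hfc : Continuous f := by
    refine continuous_const.div (by fun_prop) fun y => (pow_pos (hs y) _).ne'
  have hf0 : ∀ y, 0 ≤ f y := fun y => by positivity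
  have hi : IntegrableOn (fun w : EuclideanSpace ℝ (Fin M) => f ‖w‖) (Metric.ball 0 Λ) :=
    ((hfc.comp continuous_norm).continuousOn.integrableOn_compact
      (isCompact_closedBall 0 Λ)).mono_set Metric.ball_subset_closedBall
  rw [← ofReal_integral_eq_lintegral_ofReal hi (Eventually.of_forall fun w => hf0 _)]
  congr 1
  rw [← integral_indicator Metric.isOpen_ball.measurableSet]
  have e1 : (Metric.ball (0 : EuclideanSpace ℝ (Fin M)) Λ).indicator (fun w => f ‖w‖) =
      fun w => (Iio Λ).indicator f ‖w‖ := by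
    ext w
    simp [indicator]
  rw [e1, integral_fun_norm_addHaar volume ((Iio Λ).indicator f)]
  simp only [finrank_euclideanSpace, Fintype.card_fin, nsmul_eq_mul, smul_eq_mul]
  have e2 : ∫ y in Ioi (0 : ℝ), y ^ (M - 1) * (Iio Λ).indicator f y =
      ∫ y in (0 : ℝ)..Λ, y ^ (M - 1) * f y := by
    rw [intervalIntegral.integral_of_le hΛ.le, integral_Ioc_eq_integral_Ioo,
      ← Ioi_inter_Iio, ← setIntegral_indicator measurableSet_Iio]
    congr 1 with y
    by_cases hy : y < Λ <;> simp [indicator, hy]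
  have e3 : (M : ℝ) * ∫ y in (0 : ℝ)..Λ, y ^ (M - 1) * f y = (Λ / √(1 + Λ ^ 2)) ^ M := by
    rw [← intervalIntegral.integral_const_mul,
      intervalIntegral.integral_eq_sub_of_hasDerivAt
        (fun y _ => hasDerivAt_div_sqrt_pow M hM y)]
    · have : M ≠ 0 := by omega
      simp [this]
    · exact (continuous_const.mul ((continuous_pow _).mul hfc)).intervalIntegrable _ _
  rw [e2, ← e3, Measure.real]
  ring

lemma lintegral_slope_lt_top (M : ℕ) :
    ∫⁻ w : EuclideanSpace ℝ (Fin M), ENNReal.ofReal (1 / √(1 + ‖w‖ ^ 2) ^ (M + 1)) < ∞ := by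
  have h := integrable_rpow_neg_one_add_norm_sq (E := EuclideanSpace ℝ (Fin M))
    (μ := volume) (r := (M + 1 : ℕ)) (by simp)
  have he : ∀ w : EuclideanSpace ℝ (Fin M), 1 / √(1 + ‖w‖ ^ 2) ^ (M + 1) =
      (1 + ‖w‖ ^ 2) ^ (-((M + 1 : ℕ) : ℝ) / 2) := by
    intro w
    have hp : 0 ≤ 1 + ‖w‖ ^ 2 := by positivity
    rw [Real.sqrt_eq_rpow, ← Real.rpow_natCast, ← Real.rpow_mul hp, one_div,
      ← Real.rpow_neg hp]
    congr 1
    ring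
  simp_rw [he]
  exact h.lintegral_lt_top

/-- A pointwise lower bound `a s - d - b |h|` on the jump measure of `h = descent s w`, for depths
`s ∈ (ε, ρ)` and slopes `|w| < Λ`, integrated against the kernel. The main term and the error `b |h|`
both yield `log (ρ / ε)`, while `d` yields only `d / ε`. Subtraction is avoided by keeping the error
terms on the right-hand side. -/
lemma energy_lower_bound {M : ℕ} {A B : Set (EuclideanSpace ℝ (Fin (M + 1)))}
    (hA : MeasurableSet A) (hB : MeasurableSet B)
    {a b d ε ρ Λ : ℝ} (ha : 0 ≤ a) (hb : 0 ≤ b) (hd : 0 ≤ d) (hε : 0 < ε) (hερ : ε ≤ ρ)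
    (hm : ∀ s ∈ Ioo ε ρ, ∀ w ∈ Metric.ball (0 : EuclideanSpace ℝ (Fin M)) Λ,
      ENNReal.ofReal (a * s) ≤ volume (A ∩ {x | x + descent s w ∈ B}) + ENNReal.ofReal d +
        ENNReal.ofReal (b * ‖descent s w‖)) :
    ENNReal.ofReal (a * Real.log (ρ / ε)) *
      ∫⁻ w in Metric.ball (0 : EuclideanSpace ℝ (Fin M)) Λ,
        ENNReal.ofReal (1 / √(1 + ‖w‖ ^ 2) ^ (M + 2)) ≤
    (∫⁻ h : EuclideanSpace ℝ (Fin (M + 1)), ENNReal.ofReal (1 / ‖h‖ ^ (M + 1 + 1)) *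
        volume (A ∩ {x | x + h ∈ B})) +
      ENNReal.ofReal (d / ε + b * Real.log (ρ / ε)) *
        ∫⁻ w : EuclideanSpace ℝ (Fin M), ENNReal.ofReal (1 / √(1 + ‖w‖ ^ 2) ^ (M + 1)) := by
  set D := Metric.ball (0 : EuclideanSpace ℝ (Fin M)) Λ
  set K := ∫⁻ w : EuclideanSpace ℝ (Fin M), ENNReal.ofReal (1 / √(1 + ‖w‖ ^ 2) ^ (M + 1)) with hK
  have hD : MeasurableSet D := Metric.isOpen_ball.measurableSet
  have hms : Measurable fun h : EuclideanSpace ℝ (Fin (M + 1)) =>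
      volume (A ∩ {x | x + h ∈ B}) :=
    measurable_measure_prodMk_left
      ((measurable_snd hA).inter ((measurable_snd.add measurable_fst) hB))
  have hmF : Measurable fun h : EuclideanSpace ℝ (Fin (M + 1)) =>
      ENNReal.ofReal (1 / ‖h‖ ^ (M + 1 + 1)) * volume (A ∩ {x | x + h ∈ B}) := by
    have : Measurable fun h : EuclideanSpace ℝ (Fin (M + 1)) =>
      ENNReal.ofReal (1 / ‖h‖ ^ (M + 1 + 1)) := by fun_prop
    exact this.mul hms
  have hpos : ∀ s ∈ Icc ε ρ, 0 < s := fun s hs => hε.trans_le hs.1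
  have hlog : ∀ q : ℝ, 0 ≤ q → ∫⁻ s in Ioo ε ρ, ENNReal.ofReal (q / s) =
      ENNReal.ofReal (q * Real.log (ρ / ε)) := by
    intro q hq
    rw [setLIntegral_Ioo_of_hasDerivAt (F := fun s => q * Real.log s) hερ]
    · rw [Real.log_div (hε.trans_le hερ).ne' hε.ne', mul_sub]
    · intro s hs
      simpa [div_eq_mul_inv] using (Real.hasDerivAt_log (hpos s hs).ne').const_mul q
    · exact continuousOn_const.div continuousOn_id fun s hs => (hpos s hs).ne'
    · exact fun s hs => div_nonneg hq (hpos s (Ioo_subset_Icc_self hs)).le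
  have hsq : ∫⁻ s in Ioo ε ρ, ENNReal.ofReal (d / s ^ 2) ≤ ENNReal.ofReal (d / ε) := by
    rw [setLIntegral_Ioo_of_hasDerivAt (F := fun s => -(d * s⁻¹)) hερ]
    · apply ENNReal.ofReal_le_ofReal
      have : 0 ≤ d * ρ⁻¹ := mul_nonneg hd (inv_nonneg.2 (hε.le.trans hερ))
      rw [div_eq_mul_inv]
      linarith
    · intro s hs
      have := ((hasDerivAt_inv (hpos s hs).ne').const_mul d).neg
      refine this.congr_deriv ?_
      rw [mul_neg, neg_neg, div_eq_mul_inv]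
    · exact continuousOn_const.div (by fun_prop) fun s hs => (pow_pos (hpos s hs) 2).ne'
    · exact fun s hs => by positivity
  have hpt : ∀ s ∈ Ioo ε ρ, ∀ w ∈ D,
      ENNReal.ofReal (a / s) * ENNReal.ofReal (1 / √(1 + ‖w‖ ^ 2) ^ (M + 2)) ≤
      ENNReal.ofReal (s ^ M) * (ENNReal.ofReal (1 / ‖descent s w‖ ^ (M + 1 + 1)) *
        volume (A ∩ {x | x + descent s w ∈ B})) +
      ENNReal.ofReal (d / s ^ 2 + b / s) *
        ENNReal.ofReal (1 / √(1 + ‖w‖ ^ 2) ^ (M + 1)) := by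
    intro s hs w hw
    have hs0 : 0 < s := hpos s (Ioo_subset_Icc_self hs)
    have h1 := hm s hs w hw
    set J := √(1 + ‖w‖ ^ 2) with hJ
    have hJ1 : 1 ≤ J := Real.one_le_sqrt.2 (by nlinarith [sq_nonneg ‖w‖])
    have hJ0 : 0 < J := by positivity
    rw [norm_descent hs0.le, ← hJ] at h1 ⊢
    set m := volume (A ∩ {x | x + descent s w ∈ B})
    calc _ = (ENNReal.ofReal (s ^ M) * ENNReal.ofReal (1 / (s * J) ^ (M + 1 + 1))) *
          ENNReal.ofReal (a * s) := by
          rw [← ENNReal.ofReal_mul (by positivity), ← ENNReal.ofReal_mul (by positivity),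
            ← ENNReal.ofReal_mul (by positivity)]
          congr 1
          field_simp
          ring
      _ ≤ (ENNReal.ofReal (s ^ M) * ENNReal.ofReal (1 / (s * J) ^ (M + 1 + 1))) *
          (m + ENNReal.ofReal d + ENNReal.ofReal (b * (s * J))) := by gcongr
      _ = ENNReal.ofReal (s ^ M) * (ENNReal.ofReal (1 / (s * J) ^ (M + 1 + 1)) * m) +
          ENNReal.ofReal (s ^ M * (1 / (s * J) ^ (M + 1 + 1)) * (d + b * (s * J))) := by
          have hbJ : 0 ≤ b * (s * J) := by positivity
          rw [ENNReal.ofReal_mul (p := s ^ M * (1 / (s * J) ^ (M + 1 + 1))) (by positivity),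
            ENNReal.ofReal_mul (p := s ^ M) (by positivity), ENNReal.ofReal_add hd hbJ]
          ring
      _ ≤ _ := by
          refine add_le_add le_rfl ?_
          rw [← ENNReal.ofReal_mul (by positivity)]
          apply ENNReal.ofReal_le_ofReal
          have e1 : s ^ M * (1 / (s * J) ^ (M + 1 + 1)) * (d + b * (s * J)) =
              (d / s ^ 2) * (1 / J ^ (M + 1)) * (1 / J) + b / s * (1 / J ^ (M + 1)) := by
            field_simp
            ring
          have e2 : (d / s ^ 2) * (1 / J ^ (M + 1)) * (1 / J) ≤
              (d / s ^ 2) * (1 / J ^ (M + 1)) := by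
            apply mul_le_of_le_one_right (by positivity)
            rw [div_le_one hJ0]
            exact hJ1
          rw [e1, add_mul]
          linarith
  have hmw : Measurable fun w : EuclideanSpace ℝ (Fin M) =>
      ENNReal.ofReal (1 / √(1 + ‖w‖ ^ 2) ^ (M + 1)) := by fun_prop
  have hmw' : Measurable fun w : EuclideanSpace ℝ (Fin M) =>
      ENNReal.ofReal (1 / √(1 + ‖w‖ ^ 2) ^ (M + 2)) := by fun_prop
  calc _ = ∫⁻ s in Ioo ε ρ, ∫⁻ w in D,
        ENNReal.ofReal (a / s) * ENNReal.ofReal (1 / √(1 + ‖w‖ ^ 2) ^ (M + 2)) := by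
        rw [← hlog a ha, ← lintegral_mul_const _ (by fun_prop)]
        simp_rw [lintegral_const_mul _ hmw']
    _ ≤ ∫⁻ s in Ioo ε ρ, ((∫⁻ w : EuclideanSpace ℝ (Fin M),
          ENNReal.ofReal (s ^ M) * (ENNReal.ofReal (1 / ‖descent s w‖ ^ (M + 1 + 1)) *
            volume (A ∩ {x | x + descent s w ∈ B}))) +
        ENNReal.ofReal (d / s ^ 2 + b / s) * K) := by
        refine setLIntegral_mono' measurableSet_Ioo fun s hs => ?_
        refine (setLIntegral_mono' hD (hpt s hs)).trans
          ((setLIntegral_le_lintegral D _).trans ?_)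
        rw [lintegral_add_right _ (hmw.const_mul _), lintegral_const_mul _ hmw]
    _ = (∫⁻ s in Ioo ε ρ, ∫⁻ w : EuclideanSpace ℝ (Fin M),
          ENNReal.ofReal (s ^ M) * (ENNReal.ofReal (1 / ‖descent s w‖ ^ (M + 1 + 1)) *
            volume (A ∩ {x | x + descent s w ∈ B}))) +
        (∫⁻ s in Ioo ε ρ, ENNReal.ofReal (d / s ^ 2 + b / s)) * K := by
        rw [lintegral_add_right _ (by fun_prop), lintegral_mul_const _ (by fun_prop)]
    _ ≤ _ := by
        gcongr ?_ + ?_ * K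
        · exact lintegral_descent_le hmF measurableSet_Ioo
            fun s hs => hpos s (Ioo_subset_Icc_self hs)
        · calc _ ≤ ∫⁻ s in Ioo ε ρ, (ENNReal.ofReal (d / s ^ 2) + ENNReal.ofReal (b / s)) :=
                lintegral_mono fun s => ENNReal.ofReal_add_le
            _ ≤ _ := by
                rw [lintegral_add_right _ (by fun_prop), hlog b hb,
                  ENNReal.ofReal_add (by positivity)
                    (mul_nonneg hb (Real.log_nonneg ((one_le_div hε).2 hερ)))]
                gcongr

/-! ### Passage to the limit -/

lemma volume_slab_diff_le {M : ℕ} {R q a b : ℝ} (hR : 0 < R) (hab : a ≤ b)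
    {A : Set (EuclideanSpace ℝ (Fin (M + 1)))} (hA : MeasurableSet A)
    (h : (volume (slab M R (Ioo a b) ∩ A)).toReal > R ^ M * (b - a) - q) :
    volume (slab M R (Ioo a b) \ A) ≤ ENNReal.ofReal q := by
  have hv := volume_slab M hR.le a b
  have hsum := measure_inter_add_sdiff (μ := volume) (slab M R (Ioo a b)) hA
  have hfin : volume (slab M R (Ioo a b)) ≠ ∞ := by rw [hv]; exact ENNReal.ofReal_ne_top
  have hf1 := measure_ne_top_of_subset (inter_subset_left (t := A)) hfin
  have hf2 := measure_ne_top_of_subset (sdiff_subset (t := A)) hfin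
  rw [hv] at hsum
  have h3 := congrArg ENNReal.toReal hsum
  rw [ENNReal.toReal_add hf1 hf2,
    ENNReal.toReal_ofReal (mul_nonneg (by positivity) (by linarith))] at h3
  rw [← ENNReal.ofReal_toReal hf2]
  exact ENNReal.ofReal_le_ofReal (by linarith)

lemma setOf_eq_slab {M : ℕ} (R : ℝ) (J : Set ℝ) (h : M + 1 - 1 < M + 1) :
    {x : EuclideanSpace ℝ (Fin (M + 1)) |
      (∀ i : Fin (M + 1), (i : ℕ) < M + 1 - 1 → |x i| ≤ R / 2) ∧ x ⟨M + 1 - 1, h⟩ ∈ J} =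
    slab M R J := by
  ext x
  simp only [slab, mem_ofPred_eq, Fin.forall_fin_succ', Fin.val_castSucc, Fin.val_last,
    Nat.add_sub_cancel, Fin.is_lt, lt_irrefl, forall_const, IsEmpty.forall_iff, and_true,
    abs_le, mem_Icc]
  exact Iff.rfl

lemma volume_cube_lt_top (M : ℕ) (R : ℝ) : volume (cube (M + 1) R) < ∞ := by
  have : cube (M + 1) R ⊆ {x | (∀ i : Fin M, x i.castSucc ∈ Icc (-(R / 2)) (R / 2)) ∧
      x (Fin.last M) ∈ Icc (-(R / 2)) (R / 2)} :=
    fun x hx => ⟨fun i => abs_le.1 (hx _), abs_le.1 (hx _)⟩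
  refine (measure_mono this).trans_lt ?_
  rw [volume_box]
  simp only [Real.volume_Icc]
  finiteness

lemma one_sub_le_div_sqrt {lam : ℝ} (hl : 0 < lam) (hl1 : lam < 1) :
    1 - lam ≤ 1 / lam / √(1 + (1 / lam) ^ 2) := by
  have e : √(1 + (1 / lam) ^ 2) = √(1 + lam ^ 2) / lam := by
    rw [show 1 + (1 / lam) ^ 2 = (1 + lam ^ 2) / lam ^ 2 by field_simp; ring,
      Real.sqrt_div (by positivity), Real.sqrt_sq hl.le]
  have hp : 0 < √(1 + lam ^ 2) := Real.sqrt_pos.2 (by positivity)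
  have e2 : 1 / lam / (√(1 + lam ^ 2) / lam) = 1 / √(1 + lam ^ 2) := by field_simp
  rw [e, e2, le_div_iff₀ hp]
  have h1 : √(1 + lam ^ 2) ≤ 1 + lam := Real.sqrt_le_iff.2 ⟨by linarith, by nlinarith⟩
  nlinarith

/-- The constant reached in the limit, with slope cutoff `Λ = 1 / λ`, dominates the claimed one for
`ξ = 2 M + K / ω + 1`, by Bernoulli's inequality. -/
lemma limit_constant_ge {M : ℕ} {ω K R lam : ℝ} (hω : 0 < ω) (hK : 0 ≤ K) (hR : 0 < R)
    (hl : 0 < lam) (hl8 : lam < 1 / 8) (hξ : 4 * (2 * M + K / ω + 1) * lam < 1) :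
    R ^ M * ω * (1 - 3 * lam) * (1 - 4 * (2 * M + K / ω + 1) * lam) ≤
      (R * (1 - 4 * lam)) ^ M * (ω * (1 / lam / √(1 + (1 / lam) ^ 2)) ^ M) -
        2 * lam * R ^ M * K := by
  have h1 := one_sub_le_div_sqrt hl (by linarith)
  have h2 : 1 - M * (5 * lam) ≤ ((1 - 4 * lam) * (1 / lam / √(1 + (1 / lam) ^ 2))) ^ M :=
    calc 1 - M * (5 * lam) = 1 + M * (-(5 * lam)) := by ring
      _ ≤ (1 + -(5 * lam)) ^ M := one_add_mul_le_pow (by linarith) M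
      _ ≤ _ := by
        refine pow_le_pow_left₀ (by linarith) ?_ M
        nlinarith
  have hRM : 0 < R ^ M := by positivity
  have hq : 0 ≤ K / ω := by positivity
  have hKω : K = ω * (K / ω) := by field_simp
  have hM : (0 : ℝ) ≤ M := Nat.cast_nonneg M
  set X := ((1 - 4 * lam) * (1 / lam / √(1 + (1 / lam) ^ 2))) ^ M with hX
  have e1 : (R * (1 - 4 * lam)) ^ M * (ω * (1 / lam / √(1 + (1 / lam) ^ 2)) ^ M) =
      R ^ M * ω * X := by
    rw [hX, mul_pow, mul_pow]
    ring
  have e2 : 2 * lam * R ^ M * K = R ^ M * ω * (2 * lam * (K / ω)) := by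
    field_simp
  rw [e1, e2, ← mul_sub, mul_assoc (R ^ M * ω)]
  gcongr
  have h3 : (1 - 3 * lam) * (1 - 4 * (2 * M + K / ω + 1) * lam) ≤
      1 - 4 * (2 * M + K / ω + 1) * lam :=
    mul_le_of_le_one_left (by linarith) (by linarith)
  nlinarith [mul_nonneg hM hl.le, mul_nonneg hq hl.le]

/-- Asymptotic lower bound for the logarithmically rescaled interaction energy of
well-separated phases in a cube: there is a dimensional constant `ξ = ξ(N-1) > 0` such that
for sequences `ε_j → 0⁺` and disjoint `A_j, B_j ⊆ Q_R(0)` almost filling the upper resp.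
lower half-cube up to `λ²` and with small transition region,
`liminf_j (1/|ln ε_j|) G(A_j, B_j, Q_R(0)) ≥ R^{N-1} ω_{N-1} (1-3λ)(1-4ξλ)`. -/
theorem stmt10 (N : ℕ) (hN : 2 ≤ N) :
    ∃ ξ : ℝ, 0 < ξ ∧
      ∀ (R c lam : ℝ), 0 < R → 0 < c → 0 < lam → lam < 1 / 3 →
      ∀ ε : ℕ → ℝ, (∀ j, 0 < ε j ∧ ε j < 1) → Tendsto ε atTop (𝓝 0) →
      ∀ A B : ℕ → Set (EuclideanSpace ℝ (Fin N)),
        (∀ j, MeasurableSet (A j)) → (∀ j, MeasurableSet (B j)) →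
        (∀ j, Disjoint (A j) (B j)) →
        (∀ j, A j ⊆ {x | ∀ i, |x i| ≤ R / 2}) →
        (∀ j, B j ⊆ {x | ∀ i, |x i| ≤ R / 2}) →
        (∀ j, (volume ({x : EuclideanSpace ℝ (Fin N) |
            (∀ i : Fin N, (i : ℕ) < N - 1 → |x i| ≤ R / 2) ∧
            x ⟨N - 1, by omega⟩ ∈ Set.Ioo 0 (R / 2)} ∩ A j)).toReal >
          (1 - lam ^ 2) * R ^ N / 2) →
        (∀ j, (volume ({x : EuclideanSpace ℝ (Fin N) |
            (∀ i : Fin N, (i : ℕ) < N - 1 → |x i| ≤ R / 2) ∧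
            x ⟨N - 1, by omega⟩ ∈ Set.Ioo (-(R / 2)) 0} ∩ B j)).toReal >
          (1 - lam ^ 2) * R ^ N / 2) →
        (∀ j, (volume ({x : EuclideanSpace ℝ (Fin N) | ∀ i, |x i| ≤ R / 2} \
            (A j ∪ B j))).toReal <
          c * ε j * (1 - 3 * lam - 6 / |Real.log (ε j)|)) →
        liminf (fun j => Gkernel N (A j) (B j) {x | ∀ i, |x i| ≤ R / 2} /
            ENNReal.ofReal |Real.log (ε j)|) atTop ≥
          ENNReal.ofReal (R ^ (N - 1) *
            (volume (Metric.ball (0 : EuclideanSpace ℝ (Fin (N - 1))) 1)).toReal *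
            (1 - 3 * lam) * (1 - 4 * ξ * lam)) := by
  obtain ⟨M, rfl⟩ : ∃ M, N = M + 1 := ⟨N - 1, by omega⟩
  have hM : 1 ≤ M := by omega
  set K : ℝ := (∫⁻ w : EuclideanSpace ℝ (Fin M),
    ENNReal.ofReal (1 / √(1 + ‖w‖ ^ 2) ^ (M + 1))).toReal with hKdef
  have hKtop := (lintegral_slope_lt_top M).ne
  have hK0 : 0 ≤ K := ENNReal.toReal_nonneg
  set ω : ℝ := (volume (Metric.ball (0 : EuclideanSpace ℝ (Fin M)) 1)).toReal with hωdef
  have hω : 0 < ω := ENNReal.toReal_pos (Metric.measure_ball_pos _ _ one_pos).ne'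
    measure_ball_lt_top.ne
  have hq : 0 ≤ K / ω := by positivity
  have hM' : (1 : ℝ) ≤ M := by exact_mod_cast hM
  refine ⟨2 * M + K / ω + 1, by positivity, ?_⟩
  intro R c lam hR hc hl hl3 ε hε hεlim A B hA hB _ hAQ hBQ hPA hPB hgap
  change ENNReal.ofReal (R ^ M * ω * (1 - 3 * lam) * (1 - 4 * (2 * M + K / ω + 1) * lam)) ≤
    liminf (fun j => Gkernel (M + 1) (A j) (B j) (cube (M + 1) R) /
      ENNReal.ofReal |Real.log (ε j)|) atTop
  -- for large `λ` the claimed bound is nonpositive; otherwise `λ < 1 / 8`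
  rcases le_or_gt 1 (4 * (2 * M + K / ω + 1) * lam) with hbig | hξ
  · rw [ENNReal.ofReal_of_nonpos]
    · exact zero_le
    · exact mul_nonpos_of_nonneg_of_nonpos
        (mul_nonneg (by positivity) (by linarith)) (by linarith)
  have hl8 : lam < 1 / 8 := by nlinarith
  set Λ : ℝ := 1 / lam with hΛ
  have hΛ0 : 0 < Λ := by positivity
  -- depths below `ρ` with slopes below `Λ` give displacements of length at most `λ R`
  set ρ : ℝ := lam ^ 2 * R / 2 with hρ
  have hρ0 : 0 < ρ := by positivity
  set a : ℝ := (R * (1 - 4 * lam)) ^ M with ha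
  have ha0 : 0 ≤ a := pow_nonneg (mul_nonneg hR.le (by linarith)) M
  set b : ℝ := 2 * lam * R ^ M with hb
  have hb0 : 0 ≤ b := by positivity
  set κ : ℝ := ω * (Λ / √(1 + Λ ^ 2)) ^ M with hκ
  have hκ0 : 0 ≤ κ := by positivity
  have hevρ : ∀ᶠ j in atTop, ε j < ρ := hεlim.eventually (gt_mem_nhds hρ0)
  have hlower : ∀ᶠ j in atTop,
      ENNReal.ofReal ((a * κ * Real.log (ρ / ε j) - (c + b * Real.log (ρ / ε j)) * K) /
        |Real.log (ε j)|) ≤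
      Gkernel (M + 1) (A j) (B j) (cube (M + 1) R) / ENNReal.ofReal |Real.log (ε j)| := by
    filter_upwards [hevρ] with j hj
    obtain ⟨hε0, hε1⟩ := hε j
    have hlogpos : 0 < |Real.log (ε j)| := abs_pos.2 (Real.log_neg hε0 hε1).ne
    have hL0 : 0 ≤ Real.log (ρ / ε j) := Real.log_nonneg ((one_le_div hε0).2 hj.le)
    have hPA' : volume (slab M R (Ioo 0 (R / 2)) \ A j) ≤
        ENNReal.ofReal (lam ^ 2 * R ^ (M + 1) / 2) := by
      refine volume_slab_diff_le hR (by linarith) (hA j) ?_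
      have := hPA j
      rw [setOf_eq_slab] at this
      refine lt_of_le_of_lt (le_of_eq ?_) this
      ring
    have hPB' : volume (slab M R (Ioo (-(R / 2)) 0) \ B j) ≤
        ENNReal.ofReal (lam ^ 2 * R ^ (M + 1) / 2) := by
      refine volume_slab_diff_le hR (by linarith) (hB j) ?_
      have := hPB j
      rw [setOf_eq_slab] at this
      refine lt_of_le_of_lt (le_of_eq ?_) this
      ring
    have hgap' : volume (cube (M + 1) R \ (A j ∪ B j)) ≤ ENNReal.ofReal (c * ε j) := by
      have hfin := measure_ne_top_of_subset (sdiff_subset (t := A j ∪ B j))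
        (volume_cube_lt_top M R).ne
      rw [← ENNReal.ofReal_toReal hfin]
      apply ENNReal.ofReal_le_ofReal
      refine (hgap j).le.trans ?_
      have h6 : 0 ≤ 6 / |Real.log (ε j)| := by positivity
      exact mul_le_of_le_one_right (by positivity) (by linarith)
    have hE := energy_lower_bound (M := M) (hA j) (hB j) (a := a) (b := b) (d := c * ε j)
      (ε := ε j) (ρ := ρ) (Λ := Λ) ha0 hb0 (by positivity) hε0 hj.le ?_
    · rw [← Gkernel_eq_lintegral_translate (hB j) (hAQ j) (hBQ j),
        lintegral_ball_slope hM hΛ0, ← hωdef, ← hκ, ← ENNReal.ofReal_toReal hKtop, ← hKdef,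
        mul_div_assoc, ← ENNReal.ofReal_mul (by positivity),
        ← ENNReal.ofReal_mul (by positivity)] at hE
      rw [ENNReal.ofReal_div_of_pos hlogpos]
      gcongr
      rw [ENNReal.ofReal_sub _ (by positivity), tsub_le_iff_right]
      have e1 : a * κ * Real.log (ρ / ε j) = a * Real.log (ρ / ε j) * κ := by ring
      rw [div_self hε0.ne', mul_one] at hE
      rw [e1]
      exact hE
    · intro s hs w hw
      have hs0 : 0 < s := hε0.trans hs.1
      have hw' : ‖w‖ < Λ := by simpa using hw
      have ht : ‖descent s w‖ ≤ lam * R := by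
        rw [norm_descent hs0.le]
        have h1 : √(1 + ‖w‖ ^ 2) ≤ 1 + Λ :=
          Real.sqrt_le_iff.2 ⟨by positivity, by nlinarith [norm_nonneg w]⟩
        calc s * √(1 + ‖w‖ ^ 2) ≤ ρ * (1 + Λ) := by
              gcongr
              exact hs.2.le
          _ = (lam ^ 2 + lam) * R / 2 := by
              rw [hρ, hΛ]
              field_simp
          _ ≤ lam * R := by nlinarith
      refine (volume_slab_le_jump hR hl (by linarith) (hA j) (hB j) hPA' hPB' hs0 w ht).trans ?_
      gcongr
  have hlogtop : Tendsto (fun j => |Real.log (ε j)|) atTop atTop := by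
    have h0 : Tendsto ε atTop (𝓝[>] 0) :=
      tendsto_nhdsWithin_iff.2 ⟨hεlim, Eventually.of_forall fun j => (hε j).1⟩
    exact tendsto_abs_atBot_atTop.comp (Real.tendsto_log_nhdsGT_zero.comp h0)
  have hlim : Tendsto (fun j =>
      (a * κ * Real.log (ρ / ε j) - (c + b * Real.log (ρ / ε j)) * K) / |Real.log (ε j)|)
      atTop (𝓝 (a * κ - b * K)) := by
    have h1 : Tendsto (fun j => (a * κ - b * K) +
        ((a * κ - b * K) * Real.log ρ - c * K) / |Real.log (ε j)|) atTop
        (𝓝 ((a * κ - b * K) + 0)) :=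
      tendsto_const_nhds.add (tendsto_const_nhds.div_atTop hlogtop)
    rw [add_zero] at h1
    refine h1.congr fun j => ?_
    obtain ⟨hε0, hε1⟩ := hε j
    have hneg := Real.log_neg hε0 hε1
    rw [abs_of_neg hneg, Real.log_div hρ0.ne' hε0.ne']
    have hne := hneg.ne
    field_simp
    ring
  calc ENNReal.ofReal (R ^ M * ω * (1 - 3 * lam) * (1 - 4 * (2 * M + K / ω + 1) * lam))
      ≤ ENNReal.ofReal (a * κ - b * K) :=
        ENNReal.ofReal_le_ofReal (limit_constant_ge hω hK0 hR hl hl8 hξ)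
    _ = _ := ((ENNReal.tendsto_ofReal hlim).liminf_eq).symm
    _ ≤ _ := Filter.liminf_le_liminf hlower
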